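/- arXiv:1703.10681 — 4 statements merged into one kernel-verified Lean document; each statement's English description precedes it below -/
import Mathlib

section
/- Let α, γ > 0 with α ≤ 1/(1 + γ), and suppose the oracle O satisfies: (i) O(b, A') depends only on the restriction of the bid vector b to A', and (ii) O(b, A') ≤ opt_b(A', B) for every bid vector b and every A' ⊆ A. Define the allocation rule f(b) = Greedy-OM(α, b) ∩ Greedy-TM(γ, b). Let S = f(c) for the true costs c, and for each winner i ∈ S let p_i = sup{ β > 0 : i ∈ f(β, c_{−i}) } be its threshold payment. Then Σ_{i∈S} p_i ≤ B; that is, the mechanism Deterministic-Large(α, γ) with threshold payments is budget feasible. -/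
open Classical

/-- Marginal value `m_i(S) = v(S ∪ {i}) - v(S)`. -/
noncomputable def marg {ι : Type*} [DecidableEq ι] (v : Finset ι → ℝ) (S : Finset ι) (i : ι) : ℝ :=
  v (insert i S) - v S

/-- The next agent in the greedy order once the set `S` has been selected:
an agent of `Sᶜ` maximizing marginal value over bid, ties broken by the fixed linear order. -/
noncomputable def pick {ι : Type*} [Fintype ι] [LinearOrder ι] [Nonempty ι]
    (v : Finset ι → ℝ) (b : ι → ℝ) (S : Finset ι) : ι :=
  if h : Sᶜ.Nonempty then
    (Sᶜ.filter fun j => ∀ j' ∈ Sᶜ, marg v S j' / b j' ≤ marg v S j / b j).min'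
      (by
        obtain ⟨j, hj, hmax⟩ := Finset.exists_max_image Sᶜ (fun j => marg v S j / b j) h
        exact ⟨j, Finset.mem_filter.mpr ⟨hj, hmax⟩⟩)
  else Classical.arbitrary ι

/-- `greedySet v b t` is the set `S_t` of the first `t` agents in the greedy order
computed with respect to the bid vector `b`. -/
noncomputable def greedySet {ι : Type*} [Fintype ι] [LinearOrder ι] [Nonempty ι]
    (v : Finset ι → ℝ) (b : ι → ℝ) : ℕ → Finset ι
  | 0 => ∅
  | t + 1 => insert (pick v b (greedySet v b t)) (greedySet v b t)

/-- `agent v b k` is the `k`-th agent `a_k` in the greedy order (1-indexed). -/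
noncomputable def agent {ι : Type*} [Fintype ι] [LinearOrder ι] [Nonempty ι]
    (v : Finset ι → ℝ) (b : ι → ℝ) (k : ℕ) : ι :=
  pick v b (greedySet v b (k - 1))

/-- `optVal v b B A'` is the maximum of `v S` over `S ⊆ A'` with `∑_{i ∈ S} b i ≤ B`. -/
noncomputable def optVal {ι : Type*} (v : Finset ι → ℝ) (b : ι → ℝ) (B : ℝ)
    (A' : Finset ι) : ℝ :=
  sSup (v '' {S : Finset ι | S ⊆ A' ∧ ∑ i ∈ S, b i ≤ B})

/-- The greedy threshold mechanism `Greedy-TM(γ, b)`: it outputs `S_{k-1}` where `k` is the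
least index with `b_{a_k} · v(S_k) > γ · B · m_{a_k}(S_{k-1})`, and all of `A` if no such `k`
exists. -/
noncomputable def greedyTM {ι : Type*} [Fintype ι] [LinearOrder ι] [Nonempty ι]
    (v : Finset ι → ℝ) (B γ : ℝ) (b : ι → ℝ) : Finset ι :=
  if h : ∃ k, (1 ≤ k ∧ k ≤ Fintype.card ι) ∧
      b (agent v b k) * v (greedySet v b k) >
        γ * B * marg v (greedySet v b (k - 1)) (agent v b k)
  then greedySet v b (Nat.find h - 1)
  else Finset.univ

/-- The exponential-time greedy oracle mechanism `Greedy-EOM(α, b)`: it outputs `S_{k-1}` where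
`k` is the least index with `v(S_k) > α · opt_b(A, B)`, and all of `A` if no such `k` exists. -/
noncomputable def greedyEOM {ι : Type*} [Fintype ι] [LinearOrder ι] [Nonempty ι]
    (v : Finset ι → ℝ) (B α : ℝ) (b : ι → ℝ) : Finset ι :=
  if h : ∃ k, (1 ≤ k ∧ k ≤ Fintype.card ι) ∧
      v (greedySet v b k) > α * optVal v b B Finset.univ
  then greedySet v b (Nat.find h - 1)
  else Finset.univ

/-- The greedy oracle mechanism `Greedy-OM(α, b)` with oracle `O`: it outputs
`{ a_t : 1 ≤ t ≤ n, v(S_t) ≤ α · O(b, A \ {a_t}) }`. -/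
noncomputable def greedyOM {ι : Type*} [Fintype ι] [LinearOrder ι] [Nonempty ι]
    (v : Finset ι → ℝ) (O : (ι → ℝ) → Finset ι → ℝ) (α : ℝ) (b : ι → ℝ) : Finset ι :=
  ((Finset.Icc 1 (Fintype.card ι)).filter
      (fun t => v (greedySet v b t) ≤ α * O b (Finset.univ.erase (agent v b t)))).image
    (fun t => agent v b t)

/-- An allocation rule `f`, mapping bid vectors with positive entries to subsets of the agents,
is monotone if a winner remains a winner after lowering his bid. -/
def MonotoneAlloc {ι : Type*} [DecidableEq ι] (f : (ι → ℝ) → Finset ι) : Prop :=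
  ∀ b : ι → ℝ, (∀ j, 0 < b j) → ∀ i ∈ f b, ∀ β : ℝ, 0 < β → β ≤ b i →
    i ∈ f (Function.update b i β)

section helpers
variable {ι : Type*} [Fintype ι] [LinearOrder ι] [Nonempty ι]

theorem pick_spec (v : Finset ι → ℝ) (b : ι → ℝ) (S : Finset ι) (h : Sᶜ.Nonempty) :
    pick v b S ∉ S ∧ (∀ j, j ∉ S → marg v S j / b j ≤ marg v S (pick v b S) / b (pick v b S)) ∧
    (∀ j, j ∉ S → (∀ j', j' ∉ S → marg v S j' / b j' ≤ marg v S j / b j) → pick v b S ≤ j) := by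
  have hne : (Sᶜ.filter fun j => ∀ j' ∈ Sᶜ, marg v S j' / b j' ≤ marg v S j / b j).Nonempty := by
    obtain ⟨j, hj, hmax⟩ := Finset.exists_max_image Sᶜ (fun j => marg v S j / b j) h
    exact ⟨j, Finset.mem_filter.mpr ⟨hj, hmax⟩⟩
  have hp : pick v b S = Finset.min' _ hne := by
    unfold pick
    rw [dif_pos h]
  have hm := Finset.min'_mem _ hne
  rw [← hp, Finset.mem_filter] at hm
  refine ⟨by simpa using hm.1, fun j hj => hm.2 j (by simpa using hj), fun j hj hj2 => ?_⟩
  rw [hp]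
  apply Finset.min'_le
  rw [Finset.mem_filter]
  exact ⟨by simpa using hj, fun j' hj' => hj2 j' (by simpa using hj')⟩

theorem marg_nonneg' (v : Finset ι → ℝ) (hvmono : ∀ S T : Finset ι, S ⊆ T → v S ≤ v T)
    (S : Finset ι) (i : ι) : 0 ≤ marg v S i :=
  sub_nonneg.2 (hvmono _ _ (Finset.subset_insert _ _))

theorem marg_anti (v : Finset ι → ℝ) (hvmono : ∀ S T : Finset ι, S ⊆ T → v S ≤ v T)
    (hvsub : ∀ S T : Finset ι, v (S ∪ T) + v (S ∩ T) ≤ v S + v T)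
    (S T : Finset ι) (h : S ⊆ T) (i : ι) : marg v T i ≤ marg v S i := by
  have h1 := hvsub (insert i S) T
  have h2 : insert i S ∪ T = insert i T := by
    rw [Finset.insert_union, Finset.union_eq_right.2 h]
  have h3 := hvmono S (insert i S ∩ T) (Finset.subset_inter (Finset.subset_insert _ _) h)
  rw [h2] at h1
  unfold marg
  linarith

theorem v_le_sum (v : Finset ι → ℝ) (hvmono : ∀ S T : Finset ι, S ⊆ T → v S ≤ v T)
    (hvsub : ∀ S T : Finset ι, v (S ∪ T) + v (S ∩ T) ≤ v S + v T)
    (Y T : Finset ι) : v (Y ∪ T) ≤ v Y + ∑ j ∈ T, marg v Y j := by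
  induction T using Finset.induction_on with
  | empty => simp
  | insert a T ha ih =>
    rw [Finset.sum_insert ha]
    have h1 := marg_anti v hvmono hvsub Y (Y ∪ T) Finset.subset_union_left a
    rw [Finset.union_insert]
    unfold marg at h1 ⊢
    unfold marg at ih
    linarith

theorem pick_update (v : Finset ι → ℝ) (hvmono : ∀ S T : Finset ι, S ⊆ T → v S ≤ v T)
    (c : ι → ℝ) (hc : ∀ i, 0 < c i) (i : ι) (β : ℝ) (hβ : c i ≤ β) (S : Finset ι)
    (hi : i ∉ S) (hp : pick v c S ≠ i) :
    pick v (Function.update c i β) S = pick v c S := by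
  have hne : Sᶜ.Nonempty := ⟨i, by simpa using hi⟩
  obtain ⟨h1, h2, h3⟩ := pick_spec v c S hne
  obtain ⟨g1, g2, g3⟩ := pick_spec v (Function.update c i β) S hne
  have key : marg v S i / β ≤ marg v S i / c i :=
    div_le_div_of_nonneg_left (marg_nonneg' v hvmono S i) (hc i) hβ
  have e : ∀ j, j ≠ i → Function.update c i β j = c j := fun j hj => Function.update_of_ne hj _ _
  have e' : Function.update c i β i = β := Function.update_self _ _ _
  have G2 := g2 _ h1
  rw [e _ hp] at G2
  apply le_antisymm
  · apply g3 _ h1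
    intro j hj
    rw [e _ hp]
    by_cases hji : j = i
    · subst hji; rw [e']; exact key.trans (h2 _ hj)
    · rw [e _ hji]; exact h2 _ hj
  · apply h3 _ g1
    intro j hj
    refine (h2 j hj).trans (G2.trans ?_)
    by_cases hq : pick v (Function.update c i β) S = i
    · rw [hq, e']; exact key
    · rw [e _ hq]

theorem greedy_mono (v : Finset ι → ℝ) (b : ι → ℝ) {s t : ℕ} (h : s ≤ t) :
    greedySet v b s ⊆ greedySet v b t := by
  induction h with
  | refl => exact Finset.Subset.refl _
  | step _ ih => exact ih.trans (Finset.subset_insert _ _)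

theorem greedy_card_le (v : Finset ι → ℝ) (b : ι → ℝ) (t : ℕ) :
    (greedySet v b t).card ≤ t := by
  induction t with
  | zero => simp [greedySet]
  | succ t ih => exact (Finset.card_insert_le _ _).trans (by omega)

theorem greedy_compl (v : Finset ι → ℝ) (b : ι → ℝ) {t : ℕ} (h : t < Fintype.card ι) :
    (greedySet v b t)ᶜ.Nonempty := by
  rw [← Finset.card_pos, Finset.card_compl]
  have := greedy_card_le v b t
  omega

theorem agent_notMem (v : Finset ι → ℝ) (b : ι → ℝ) {t : ℕ} (h1 : 1 ≤ t)
    (h : t ≤ Fintype.card ι) : agent v b t ∉ greedySet v b (t - 1) :=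
  (pick_spec v b _ (greedy_compl v b (by omega))).1

theorem greedy_step (v : Finset ι → ℝ) (b : ι → ℝ) {t : ℕ} (h1 : 1 ≤ t) :
    greedySet v b t = insert (agent v b t) (greedySet v b (t - 1)) := by
  obtain ⟨t, rfl⟩ : ∃ s, t = s + 1 := ⟨t - 1, by omega⟩
  rfl

theorem prefix_sub (v : Finset ι → ℝ) (hvmono : ∀ S T : Finset ι, S ⊆ T → v S ≤ v T)
    (c : ι → ℝ) (hc : ∀ i, 0 < c i) (i : ι) (β : ℝ) (hβ : c i ≤ β) (s t : ℕ)
    (ht1 : 1 ≤ t) (ht : t ≤ Fintype.card ι) (hti : agent v c t = i)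
    (hs1 : 1 ≤ s) (hsi : agent v (Function.update c i β) s = i) :
    greedySet v c (t - 1) ⊆ greedySet v (Function.update c i β) (s - 1) := by
  have hn : i ∉ greedySet v c (t - 1) := by
    have := agent_notMem v c ht1 ht
    rwa [hti] at this
  have heq : ∀ r, r ≤ t - 1 → greedySet v (Function.update c i β) r = greedySet v c r := by
    intro r
    induction r with
    | zero => intro _; rfl
    | succ r ih =>
      intro hr
      have h' := ih (by omega)
      have hn' : i ∉ greedySet v c (r + 1) := fun h => hn (greedy_mono v c hr h)
      have hn2 : i ∉ insert (pick v c (greedySet v c r)) (greedySet v c r) := hn'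
      rw [Finset.mem_insert, not_or] at hn2
      show insert (pick v _ (greedySet v _ r)) (greedySet v _ r) =
        insert (pick v _ (greedySet v _ r)) (greedySet v _ r)
      rw [h', pick_update v hvmono c hc i β hβ _ hn2.2 (Ne.symm hn2.1)]
  by_cases hst : t ≤ s
  · rw [← heq _ le_rfl]; exact greedy_mono v _ (by omega)
  · exfalso
    apply hn
    rw [← heq _ le_rfl]
    refine greedy_mono v _ (show s ≤ t - 1 by omega) ?_
    rw [greedy_step v _ hs1, hsi]
    exact Finset.mem_insert_self _ _

theorem tm_cond (v : Finset ι → ℝ) (B γ : ℝ) (b : ι → ℝ) (s : ℕ) (hs1 : 1 ≤ s)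
    (hs : s ≤ Fintype.card ι) (h : agent v b s ∈ greedyTM v B γ b) :
    b (agent v b s) * v (greedySet v b s) ≤
      γ * B * marg v (greedySet v b (s - 1)) (agent v b s) := by
  by_contra hcon
  unfold greedyTM at h
  have hex : ∃ k, (1 ≤ k ∧ k ≤ Fintype.card ι) ∧
      b (agent v b k) * v (greedySet v b k) >
        γ * B * marg v (greedySet v b (k - 1)) (agent v b k) := ⟨s, ⟨hs1, hs⟩, not_le.1 hcon⟩
  rw [dif_pos hex] at h
  have hle : Nat.find hex ≤ s := Nat.find_min' hex ⟨⟨hs1, hs⟩, not_le.1 hcon⟩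
  exact agent_notMem v b hs1 hs (greedy_mono v b (by omega) h)

theorem om_mem (v : Finset ι → ℝ) (O : (ι → ℝ) → Finset ι → ℝ) (α : ℝ) (b : ι → ℝ) (i : ι) :
    i ∈ greedyOM v O α b ↔ ∃ t, (1 ≤ t ∧ t ≤ Fintype.card ι) ∧ agent v b t = i ∧
      v (greedySet v b t) ≤ α * O b (Finset.univ.erase i) := by
  unfold greedyOM
  simp only [Finset.mem_image, Finset.mem_filter, Finset.mem_Icc]
  constructor
  · rintro ⟨t, ⟨h1, h2⟩, rfl⟩; exact ⟨t, h1, rfl, h2⟩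
  · rintro ⟨t, h1, rfl, h2⟩; exact ⟨t, ⟨h1, h2⟩, rfl⟩

theorem key_bound (v : Finset ι → ℝ)
    (hvmono : ∀ S T : Finset ι, S ⊆ T → v S ≤ v T)
    (hvsub : ∀ S T : Finset ι, v (S ∪ T) + v (S ∩ T) ≤ v S + v T)
    (B γ : ℝ) (c : ι → ℝ) (hc : ∀ i, 0 < c i)
    (O : (ι → ℝ) → Finset ι → ℝ) (α : ℝ) (hγ : 0 < γ) (hB : 0 < B)
    (i : ι) (β : ℝ) (hβ : c i ≤ β) (t : ℕ)
    (ht1 : 1 ≤ t) (ht : t ≤ Fintype.card ι) (hti : agent v c t = i)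
    (hw : i ∈ greedyOM v O α (Function.update c i β) ∩ greedyTM v B γ (Function.update c i β))
    (T : Finset ι) (hT : ∑ j ∈ T, c j ≤ B) :
    β * v T ≤ (1 + γ) * B * marg v (greedySet v c (t - 1)) i := by
  have hβ0 : 0 < β := (hc i).trans_le hβ
  rw [Finset.mem_inter, om_mem] at hw
  obtain ⟨⟨s, ⟨hs1, hs⟩, hsi, -⟩, hTM⟩ := hw
  set b := Function.update c i β with hb
  have hsub := prefix_sub v hvmono c hc i β hβ s t ht1 ht hti hs1 hsi
  rw [← hb] at hsub
  have htm := tm_cond v B γ b s hs1 hs (by rw [hsi]; exact hTM)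
  rw [hsi, greedy_step v b hs1, hsi] at htm
  have hbi : b i = β := Function.update_self _ _ _
  rw [hbi] at htm
  have hps := pick_spec v b _ (greedy_compl v b (show s - 1 < Fintype.card ι by omega))
  change agent v b s ∉ _ ∧ (∀ j, _ → _ ≤ marg v _ (agent v b s) / b (agent v b s)) ∧ _ at hps
  rw [hsi, hbi] at hps
  set X := greedySet v b (s - 1) with hX
  obtain ⟨hiX, hmax, -⟩ := hps
  have hm0 := marg_nonneg' v hvmono X i
  have hj : ∀ j ∈ T, marg v (insert i X) j ≤ c j * (marg v X i / β) := by
    intro j _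
    by_cases hj : j ∈ insert i X
    · have : marg v (insert i X) j = 0 := by
        unfold marg; rw [Finset.insert_eq_of_mem hj, sub_self]
      rw [this]
      exact mul_nonneg (hc j).le (div_nonneg hm0 hβ0.le)
    · rw [Finset.mem_insert, not_or] at hj
      have h1 := marg_anti v hvmono hvsub X (insert i X) (Finset.subset_insert _ _) j
      have h2 := hmax j hj.2
      have hbj : b j = c j := Function.update_of_ne hj.1 _ _
      rw [hbj, div_le_iff₀ (hc j)] at h2
      linarith
  have h1 := v_le_sum v hvmono hvsub (insert i X) T
  have h2 := hvmono T (insert i X ∪ T) Finset.subset_union_right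
  have h3 := Finset.sum_le_sum hj
  rw [← Finset.sum_mul] at h3
  have h4 := mul_le_mul_of_nonneg_right hT (div_nonneg hm0 hβ0.le)
  have h5 : v T ≤ v (insert i X) + B * (marg v X i / β) := by linarith
  have h6 := mul_le_mul_of_nonneg_left h5 hβ0.le
  have h7 : β * (v (insert i X) + B * (marg v X i / β)) =
      β * v (insert i X) + B * marg v X i := by field_simp
  have h8 := marg_anti v hvmono hvsub _ _ hsub i
  have h9 := mul_le_mul_of_nonneg_left h8 (show 0 ≤ (1 + γ) * B by positivity)
  linarith

theorem opt_attained (v : Finset ι → ℝ) (b : ι → ℝ) (B : ℝ) (hB : 0 < B) (A' : Finset ι) :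
    (∃ T, T ⊆ A' ∧ ∑ i ∈ T, b i ≤ B ∧ v T = optVal v b B A') ∧
    ∀ T, T ⊆ A' → ∑ i ∈ T, b i ≤ B → v T ≤ optVal v b B A' := by
  have hfin : (v '' {S : Finset ι | S ⊆ A' ∧ ∑ i ∈ S, b i ≤ B}).Finite := Set.toFinite _
  have hne : (v '' {S : Finset ι | S ⊆ A' ∧ ∑ i ∈ S, b i ≤ B}).Nonempty :=
    ⟨v ∅, ∅, ⟨Finset.empty_subset _, by simpa using hB.le⟩, rfl⟩
  constructor
  · obtain ⟨T, ⟨h1, h2⟩, h3⟩ := hne.csSup_mem hfin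
    exact ⟨T, h1, h2, h3⟩
  · intro T h1 h2
    exact le_csSup hfin.bddAbove ⟨T, ⟨h1, h2⟩, rfl⟩

theorem agent_surj (v : Finset ι → ℝ) (b : ι → ℝ) (i : ι) :
    ∃ t, (1 ≤ t ∧ t ≤ Fintype.card ι) ∧ agent v b t = i := by
  have hcard : ∀ t, t ≤ Fintype.card ι → (greedySet v b t).card = t := by
    intro t
    induction t with
    | zero => intro _; rfl
    | succ t ih =>
      intro h
      have := agent_notMem v b (show 1 ≤ t + 1 by omega) h
      rw [greedy_step v b (show 1 ≤ t + 1 by omega), Finset.card_insert_of_notMem this]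
      simp only [Nat.add_sub_cancel]
      rw [ih (by omega)]
  have huniv : greedySet v b (Fintype.card ι) = Finset.univ :=
    Finset.card_eq_iff_eq_univ _ |>.1 (hcard _ le_rfl)
  have : ∀ n, i ∈ greedySet v b n → ∃ t, (1 ≤ t ∧ t ≤ n) ∧ agent v b t = i := by
    intro n
    induction n with
    | zero => intro h; simp [greedySet] at h
    | succ n ih =>
      intro h
      rw [greedy_step v b (show 1 ≤ n + 1 by omega), Finset.mem_insert] at h
      rcases h with h | h
      · exact ⟨n + 1, ⟨by omega, le_rfl⟩, h.symm⟩
      · obtain ⟨t, ⟨h1, h2⟩, h3⟩ := ih h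
        exact ⟨t, ⟨h1, by omega⟩, h3⟩
  exact this _ (by rw [huniv]; exact Finset.mem_univ _)

end helpers

/-- `Deterministic-Large(α, γ)` with threshold payments is budget feasible
whenever `α ≤ 1/(1+γ)` (Lemma 5.3). -/
theorem deterministicLarge_budget_feasible {ι : Type*} [Fintype ι] [LinearOrder ι] [Nonempty ι]
    (v : Finset ι → ℝ) (hv0 : v (∅ : Finset ι) = 0)
    (hvmono : ∀ S T : Finset ι, S ⊆ T → v S ≤ v T)
    (hvsub : ∀ S T : Finset ι, v (S ∪ T) + v (S ∩ T) ≤ v S + v T)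
    (B : ℝ) (hB : 0 < B)
    (c : ι → ℝ) (hc : ∀ i, 0 < c i) (hcB : ∀ i, c i ≤ B)
    (α γ : ℝ) (hα0 : 0 < α) (hγ0 : 0 < γ) (hαγ : α ≤ 1 / (1 + γ))
    (O : (ι → ℝ) → Finset ι → ℝ)
    (hO1 : ∀ (b b' : ι → ℝ) (A' : Finset ι), (∀ j ∈ A', b j = b' j) → O b A' = O b' A')
    (hO2 : ∀ (b : ι → ℝ) (A' : Finset ι), O b A' ≤ optVal v b B A') :
    ∑ i ∈ greedyOM v O α c ∩ greedyTM v B γ c,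
      sSup {β : ℝ | 0 < β ∧
        i ∈ greedyOM v O α (Function.update c i β) ∩
              greedyTM v B γ (Function.update c i β)} ≤ B := by
  set S := greedyOM v O α c ∩ greedyTM v B γ c with hS
  rcases S.eq_empty_or_nonempty with he | hne
  · rw [he]; simpa using hB.le
  have hpos : ∀ i, ∃ t, i ∈ S → (1 ≤ t ∧ t ≤ Fintype.card ι) ∧ agent v c t = i ∧
      v (greedySet v c t) ≤ α * O c (Finset.univ.erase i) := by
    intro i
    by_cases hi : i ∈ S
    · obtain ⟨t, ht⟩ := (om_mem v O α c i).1 (Finset.mem_inter.1 hi).1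
      exact ⟨t, fun _ => ht⟩
    · exact ⟨0, fun h => absurd h hi⟩
  choose pos hpos using hpos
  obtain ⟨l, hl, hmaxl⟩ := Finset.exists_max_image S pos hne
  obtain ⟨⟨hk1, hk⟩, hkl, hkO⟩ := hpos l hl
  set k := pos l with hkdef
  obtain ⟨⟨T, hTsub, hTB, hTv⟩, hopt⟩ := opt_attained v c B hB (Finset.univ.erase l)
  have hγ1 : 0 < 1 + γ := by linarith
  have hvnn : ∀ U, 0 ≤ v U := fun U => hv0 ▸ hvmono _ _ (Finset.empty_subset U)
  have hVk : (1 + γ) * v (greedySet v c k) ≤ v T := by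
    have h1 : v (greedySet v c k) ≤ α * v T := by
      rw [hTv]; exact hkO.trans (mul_le_mul_of_nonneg_left (hO2 _ _) hα0.le)
    have h2 : α * v T ≤ 1 / (1 + γ) * v T := mul_le_mul_of_nonneg_right hαγ (hvnn T)
    have h3 : (1 + γ) * (1 / (1 + γ) * v T) = v T := by field_simp
    nlinarith [mul_le_mul_of_nonneg_left (h1.trans h2) hγ1.le]
  have hself : ∀ i, Function.update c i (c i) = c := fun i => Function.update_eq_self i c
  rcases (hvnn (greedySet v c k)).eq_or_lt with hz | hpv
  · -- degenerate case: `v` vanishes identically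
    have hT0 : v T = 0 := by
      have h1 := key_bound v hvmono hvsub B γ c hc O α hγ0 hB l (c l) le_rfl k hk1 hk hkl
        (by rw [hself]; exact hl) T hTB
      have h2 : marg v (greedySet v c (k - 1)) l = 0 := by
        have h3 := marg_nonneg' v hvmono (greedySet v c (k - 1)) l
        have h4 : marg v (greedySet v c (k - 1)) l =
            v (greedySet v c k) - v (greedySet v c (k - 1)) := by
          unfold marg; rw [greedy_step v c hk1, hkl]
        have := hvnn (greedySet v c (k - 1))
        linarith
      rw [h2, mul_zero] at h1
      have := hvnn T
      have hcl := hc l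
      by_contra hne
      have : 0 < v T := lt_of_le_of_ne this (Ne.symm hne)
      nlinarith [mul_pos hcl this]
    have hsing : ∀ j, v {j} = 0 := by
      intro j
      refine le_antisymm ?_ (hvnn _)
      by_cases hj : j = l
      · rw [hj, hz]
        apply hvmono
        rw [greedy_step v c hk1, hkl]
        simp
      · rw [← hT0, hTv]
        exact hopt _ (by simp [hj]) (by simpa using hcB j)
    have hv : ∀ U, v U = 0 := by
      intro U
      refine le_antisymm ?_ (hvnn _)
      have := v_le_sum v hvmono hvsub ∅ U
      simpa [marg, hv0, hsing] using this
    have : ∀ i ∈ S, sSup {β : ℝ | 0 < β ∧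
        i ∈ greedyOM v O α (Function.update c i β) ∩
              greedyTM v B γ (Function.update c i β)} = 0 := by
      intro i hi
      apply Real.sSup_of_not_bddAbove
      have hsub : Set.Ioi (0 : ℝ) ⊆ {β : ℝ | 0 < β ∧
        i ∈ greedyOM v O α (Function.update c i β) ∩
              greedyTM v B γ (Function.update c i β)} := by
        intro β hβ
        refine ⟨hβ, Finset.mem_inter.2 ⟨?_, ?_⟩⟩
        · rw [om_mem]
          obtain ⟨t, h1, h2⟩ := agent_surj v (Function.update c i β) i
          refine ⟨t, h1, h2, ?_⟩
          have h3 := (hpos i hi).2.2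
          rw [hv] at h3 ⊢
          rwa [hO1 (Function.update c i β) c _ (fun j hj =>
            Function.update_of_ne (Finset.ne_of_mem_erase hj) _ _)]
        · unfold greedyTM
          rw [dif_neg]
          · exact Finset.mem_univ _
          · rintro ⟨k, -, h⟩
            simp [marg, hv] at h
      exact fun h => not_bddAbove_Ioi (0 : ℝ) (h.mono hsub)
    rw [Finset.sum_eq_zero this]
    exact hB.le
  · have hbound : ∀ i ∈ S, sSup {β : ℝ | 0 < β ∧
        i ∈ greedyOM v O α (Function.update c i β) ∩
              greedyTM v B γ (Function.update c i β)} ≤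
        B / v (greedySet v c k) *
          (v (greedySet v c (pos i - 1 + 1)) - v (greedySet v c (pos i - 1))) := by
      intro i hi
      obtain ⟨⟨h1, h2⟩, h3, -⟩ := hpos i hi
      have hm : marg v (greedySet v c (pos i - 1)) i =
          v (greedySet v c (pos i - 1 + 1)) - v (greedySet v c (pos i - 1)) := by
        unfold marg
        rw [Nat.sub_add_cancel h1, greedy_step v c h1, h3]
      rw [← hm]
      have hge : ∀ β, c i ≤ β → i ∈ greedyOM v O α (Function.update c i β) ∩
              greedyTM v B γ (Function.update c i β) →
          β ≤ B / v (greedySet v c k) * marg v (greedySet v c (pos i - 1)) i := by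
        intro β hβ hw
        have hkb := key_bound v hvmono hvsub B γ c hc O α hγ0 hB i β hβ (pos i) h1 h2 h3 hw T hTB
        have hβ0 : 0 ≤ β := (hc i).le.trans hβ
        have h5 := mul_le_mul_of_nonneg_left hVk hβ0
        have h6 : β * v (greedySet v c k) ≤ B * marg v (greedySet v c (pos i - 1)) i := by
          apply le_of_mul_le_mul_left _ hγ1
          linarith
        rw [div_mul_eq_mul_div, le_div_iff₀ hpv]
        exact h6
      have hci : i ∈ greedyOM v O α (Function.update c i (c i)) ∩
              greedyTM v B γ (Function.update c i (c i)) := by rw [hself]; exact hi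
      refine csSup_le ⟨c i, hc i, hci⟩ ?_
      rintro β ⟨-, hw⟩
      rcases le_total (c i) β with h | h
      · exact hge β h hw
      · exact h.trans (hge _ le_rfl hci)
    refine (Finset.sum_le_sum hbound).trans ?_
    rw [← Finset.mul_sum]
    have hinj : Set.InjOn (fun i => pos i - 1) (S : Set ι) := by
      intro i hi j hj hij
      have a := hpos i hi
      have b := hpos j hj
      have : pos i = pos j := by have : pos i - 1 = pos j - 1 := hij; omega
      rw [← a.2.1, ← b.2.1, this]
    have hsum : ∑ i ∈ S, (v (greedySet v c (pos i - 1 + 1)) - v (greedySet v c (pos i - 1)))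
        ≤ v (greedySet v c k) := by
      have e := Finset.sum_image (s := S) (g := fun i => pos i - 1)
        (f := fun r => v (greedySet v c (r + 1)) - v (greedySet v c r)) hinj
      rw [← e]
      have hss : S.image (fun i => pos i - 1) ⊆ Finset.range k := by
        intro r hr
        obtain ⟨i, hi, rfl⟩ := Finset.mem_image.1 hr
        have a := hpos i hi
        have := hmaxl i hi
        rw [Finset.mem_range]; omega
      refine (Finset.sum_le_sum_of_subset_of_nonneg hss (fun r _ _ =>
        sub_nonneg.2 (hvmono _ _ (greedy_mono v c (Nat.le_succ r))))).trans ?_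
      rw [Finset.sum_range_sub (fun r => v (greedySet v c r))]
      simp [greedySet, hv0]
    calc _ ≤ B / v (greedySet v c k) * v (greedySet v c k) :=
          mul_le_mul_of_nonneg_left hsum (div_nonneg hB.le hpv.le)
      _ = B := by field_simp
end

section
/- Let r ≥ 1, set α = r/(r+1) and γ = 1/r, and suppose the oracle O satisfies O(c, A') ≤ opt(A', B) ≤ r · O(c, A') for every A' ⊆ A. Let S = Greedy-OM(α, c) ∩ Greedy-TM(γ, c) with respect to the true costs c (the output of Deterministic-Large(r/(r+1), 1/r)). Then (1 + r) · v(S) + (r + 2) · v({i*}) ≥ opt(A, B). (In the large-market limit where v({i*}) is negligible compared to opt(A, B), this mechanism is therefore a (1 + r)-approximation of the optimum; with the greedy oracle achieving r = e/(e−1), this gives approximation guarantee 1 + e/(e−1) ≈ 2.58.) -/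
open Classical

theorem dl_pick_spec {ι : Type*} [Fintype ι] [LinearOrder ι] [Nonempty ι]
    (v : Finset ι → ℝ) (b : ι → ℝ) (S : Finset ι) (h : Sᶜ.Nonempty) :
    pick v b S ∉ S ∧ ∀ j, j ∉ S → marg v S j / b j ≤ marg v S (pick v b S) / b (pick v b S) := by
  have hne : (Sᶜ.filter fun j => ∀ j' ∈ Sᶜ, marg v S j' / b j' ≤ marg v S j / b j).Nonempty := by
    obtain ⟨j, hj, hmax⟩ := Finset.exists_max_image Sᶜ (fun j => marg v S j / b j) h
    exact ⟨j, Finset.mem_filter.mpr ⟨hj, hmax⟩⟩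
  have hm : pick v b S ∈ (Sᶜ.filter fun j => ∀ j' ∈ Sᶜ, marg v S j' / b j' ≤ marg v S j / b j) := by
    unfold pick
    rw [dif_pos h]
    exact Finset.min'_mem _ _
  rw [Finset.mem_filter] at hm
  refine ⟨by simpa using hm.1, fun j hj => hm.2 j (by simpa using hj)⟩

theorem dl_card {ι : Type*} [Fintype ι] [LinearOrder ι] [Nonempty ι]
    (v : Finset ι → ℝ) (b : ι → ℝ) (t : ℕ) (ht : t ≤ Fintype.card ι) :
    (greedySet v b t).card = t := by
  induction t with
  | zero => simp [greedySet]
  | succ t ih =>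
    have ih' := ih (by omega)
    have hne : (greedySet v b t)ᶜ.Nonempty := by
      rw [← Finset.card_pos, Finset.card_compl]; omega
    rw [greedySet, Finset.card_insert_of_notMem (dl_pick_spec v b _ hne).1, ih']

theorem dl_mono {ι : Type*} [Fintype ι] [LinearOrder ι] [Nonempty ι]
    (v : Finset ι → ℝ) (b : ι → ℝ) : Monotone (greedySet v b) :=
  monotone_nat_of_le_succ fun t => by
    rw [greedySet]; exact Finset.subset_insert _ _

theorem dl_mem {ι : Type*} [Fintype ι] [LinearOrder ι] [Nonempty ι]
    (v : Finset ι → ℝ) (b : ι → ℝ) (t : ℕ) (x : ι) (hx : x ∈ greedySet v b t) :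
    ∃ s, 1 ≤ s ∧ s ≤ t ∧ agent v b s = x := by
  induction t with
  | zero => simp [greedySet] at hx
  | succ t ih =>
    rw [greedySet, Finset.mem_insert] at hx
    rcases hx with hx | hx
    · exact ⟨t + 1, by omega, le_rfl, by simp [agent, hx]⟩
    · obtain ⟨s, h1, h2, h3⟩ := ih hx
      exact ⟨s, h1, by omega, h3⟩

theorem dl_le_opt {ι : Type*} [Fintype ι]
    (v : Finset ι → ℝ) (c : ι → ℝ) (B : ℝ) (A' S : Finset ι) (hS : S ⊆ A')
    (hSB : ∑ i ∈ S, c i ≤ B) : v S ≤ optVal v c B A' := by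
  unfold optVal
  exact le_csSup (Set.toFinite _).bddAbove ⟨S, ⟨hS, hSB⟩, rfl⟩

theorem dl_opt_le {ι : Type*} [Fintype ι]
    (v : Finset ι → ℝ) (c : ι → ℝ) (B : ℝ) (hB : 0 < B) (A' : Finset ι) (x : ℝ)
    (h : ∀ S ⊆ A', ∑ i ∈ S, c i ≤ B → v S ≤ x) : optVal v c B A' ≤ x := by
  unfold optVal
  apply csSup_le
  · exact ⟨v ∅, ∅, ⟨by simp, by simpa using hB.le⟩, rfl⟩
  · rintro _ ⟨S, ⟨h1, h2⟩, rfl⟩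
    exact h S h1 h2

section
variable {ι : Type*} [DecidableEq ι]

theorem dl_insert (v : Finset ι → ℝ) (hv0 : v (∅ : Finset ι) = 0)
    (hvmono : ∀ S T : Finset ι, S ⊆ T → v S ≤ v T)
    (hvsub : ∀ S T : Finset ι, v (S ∪ T) + v (S ∩ T) ≤ v S + v T) (i : ι) (S : Finset ι) :
    v (insert i S) ≤ v S + v {i} := by
  have h := hvsub S {i}
  have h2 := hvmono ∅ (S ∩ {i}) (by simp)
  rw [Finset.union_comm, ← Finset.insert_eq] at h
  linarith

theorem dl_union (v : Finset ι → ℝ)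
    (hvsub : ∀ S T : Finset ι, v (S ∪ T) + v (S ∩ T) ≤ v S + v T) (S T : Finset ι)
    (hd : Disjoint S T) :
    v (S ∪ T) ≤ v S + ∑ j ∈ T, marg v S j := by
  induction T using Finset.induction_on with
  | empty => simp
  | insert a T ha ih =>
    rw [Finset.disjoint_insert_right] at hd
    have ih := ih hd.2
    rw [Finset.sum_insert ha]
    have h := hvsub (S ∪ T) (insert a S)
    have e1 : (S ∪ T) ∪ insert a S = S ∪ insert a T := by
      ext x; simp; tauto
    have e2 : (S ∪ T) ∩ insert a S = S := by
      ext x; simp only [Finset.mem_inter, Finset.mem_union, Finset.mem_insert]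
      constructor
      · rintro ⟨h1, rfl | h2⟩
        · tauto
        · exact h2
      · tauto
    rw [e1, e2] at h
    unfold marg at *
    linarith
end

theorem dl_greedy {ι : Type*} [Fintype ι] [LinearOrder ι] [Nonempty ι]
    (v : Finset ι → ℝ)
    (hvmono : ∀ S T : Finset ι, S ⊆ T → v S ≤ v T)
    (hvsub : ∀ S T : Finset ι, v (S ∪ T) + v (S ∩ T) ≤ v S + v T)
    (B : ℝ) (hB : 0 < B) (c : ι → ℝ) (hc : ∀ i, 0 < c i) (S : Finset ι) (h : Sᶜ.Nonempty) :
    optVal v c B Finset.univ ≤ v S + B * (marg v S (pick v c S) / c (pick v c S)) := by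
  apply dl_opt_le v c B hB
  intro T _ hT
  obtain ⟨-, hp⟩ := dl_pick_spec v c S h
  set ρ := marg v S (pick v c S) / c (pick v c S) with hρ
  have hρ0 : 0 ≤ ρ := div_nonneg
    (sub_nonneg.2 (hvmono _ _ (Finset.subset_insert _ _))) (hc _).le
  have h1 : v T ≤ v (S ∪ (T \ S)) := hvmono _ _ (by intro x hx; simp [hx])
  have h2 := dl_union v hvsub S (T \ S) Finset.disjoint_sdiff
  have h3 : ∑ j ∈ T \ S, marg v S j ≤ ∑ j ∈ T \ S, c j * ρ := by
    apply Finset.sum_le_sum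
    intro j hj
    have := hp j (Finset.mem_sdiff.1 hj).2
    rw [div_le_iff₀ (hc j)] at this
    linarith
  have h4 : ∑ j ∈ T \ S, c j ≤ ∑ j ∈ T, c j :=
    Finset.sum_le_sum_of_subset_of_nonneg Finset.sdiff_subset fun i _ _ => (hc i).le
  rw [← Finset.sum_mul] at h3
  have h5 : (∑ j ∈ T \ S, c j) * ρ ≤ B * ρ := mul_le_mul_of_nonneg_right (h4.trans hT) hρ0
  linarith

theorem dl_opt_erase {ι : Type*} [Fintype ι] [DecidableEq ι]
    (v : Finset ι → ℝ) (hv0 : v (∅ : Finset ι) = 0)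
    (hvmono : ∀ S T : Finset ι, S ⊆ T → v S ≤ v T)
    (hvsub : ∀ S T : Finset ι, v (S ∪ T) + v (S ∩ T) ≤ v S + v T)
    (B : ℝ) (hB : 0 < B) (c : ι → ℝ) (hc : ∀ i, 0 < c i) (i : ι) :
    optVal v c B Finset.univ ≤ optVal v c B (Finset.univ.erase i) + v {i} := by
  apply dl_opt_le v c B hB
  intro T _ hT
  have h1 := dl_le_opt v c B (Finset.univ.erase i) (T.erase i)
    (Finset.erase_subset_erase _ (Finset.subset_univ _))
    ((Finset.sum_le_sum_of_subset_of_nonneg (Finset.erase_subset _ _)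
      fun i _ _ => (hc i).le).trans hT)
  have h2 := dl_insert v hv0 hvmono hvsub i (T.erase i)
  have h3 := hvmono T (insert i (T.erase i)) (by
    intro x hx; by_cases h : x = i <;> simp [h, hx])
  linarith

/-- `Deterministic-Large(r/(r+1), 1/r)` with an `r`-approximation oracle
satisfies `(1+r)·v(S) + (r+2)·v({i*}) ≥ opt(A, B)` (Theorem 5.4). -/
theorem deterministicLarge_main {ι : Type*} [Fintype ι] [LinearOrder ι] [Nonempty ι]
    (v : Finset ι → ℝ) (hv0 : v (∅ : Finset ι) = 0)
    (hvmono : ∀ S T : Finset ι, S ⊆ T → v S ≤ v T)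
    (hvsub : ∀ S T : Finset ι, v (S ∪ T) + v (S ∩ T) ≤ v S + v T)
    (B : ℝ) (hB : 0 < B)
    (c : ι → ℝ) (hc : ∀ i, 0 < c i) (hcB : ∀ i, c i ≤ B)
    (r : ℝ) (hr : 1 ≤ r)
    (O : (ι → ℝ) → Finset ι → ℝ)
    (hO : ∀ A' : Finset ι, O c A' ≤ optVal v c B A' ∧ optVal v c B A' ≤ r * O c A')
    (istar : ι) (histar : ∀ j : ι, v {j} ≤ v {istar}) :
    (1 + r) * v (greedyOM v O (r / (r + 1)) c ∩ greedyTM v B (1 / r) c) +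
        (r + 2) * v {istar} ≥
      optVal v c B Finset.univ := by
  have hr1 : 0 < r + 1 := by linarith
  have hr0 : 0 < r := by linarith
  have hstar0 : 0 ≤ v {istar} := by
    have := hvmono ∅ {istar} (by simp)
    linarith
  set M := optVal v c B Finset.univ with hM
  set n := Fintype.card ι with hn
  -- every agent below the threshold is selected by the oracle mechanism
  have hOM : ∀ t ≤ n, (∀ s, 1 ≤ s → s ≤ t → (r + 1) * v (greedySet v c s) ≤ M - v {istar}) →
      greedySet v c t ⊆ greedyOM v O (r / (r + 1)) c := by
    intro t ht hs x hx
    obtain ⟨s, h1, h2, h3⟩ := dl_mem v c t x hx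
    unfold greedyOM
    refine Finset.mem_image.2 ⟨s, Finset.mem_filter.2 ⟨Finset.mem_Icc.2 ⟨h1, h2.trans ht⟩, ?_⟩, h3⟩
    have h4 := hs s h1 h2
    have h5 := dl_opt_erase v hv0 hvmono hvsub B hB c hc (agent v c s)
    have h6 := (hO (Finset.univ.erase (agent v c s))).2
    have h7 := histar (agent v c s)
    rw [div_mul_eq_mul_div, le_div_iff₀ hr1]
    linarith
  -- the threshold mechanism outputs a greedy prefix which is good enough
  have hTM : ∃ t ≤ n, greedyTM v B (1 / r) c = greedySet v c t ∧
      M ≤ (1 + r) * v (greedySet v c t) + r * v {istar} := by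
    unfold greedyTM
    split_ifs with h
    · obtain ⟨⟨h1, h2⟩, h3⟩ := Nat.find_spec h
      refine ⟨Nat.find h - 1, by omega, rfl, ?_⟩
      generalize Nat.find h = k at h1 h2 h3
      obtain ⟨m, rfl⟩ : ∃ m, k = m + 1 := ⟨k - 1, by omega⟩
      simp only [Nat.add_sub_cancel, agent, gt_iff_lt] at h3 ⊢
      have hne : (greedySet v c m)ᶜ.Nonempty := by
        rw [← Finset.card_pos, Finset.card_compl, dl_card v c m (by omega)]; omega
      have hg := dl_greedy v hvmono hvsub B hB c hc _ hne
      have hi := dl_insert v hv0 hvmono hvsub (pick v c (greedySet v c m)) (greedySet v c m)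
      have hst := histar (pick v c (greedySet v c m))
      rw [greedySet] at h3
      set p := pick v c (greedySet v c m)
      have h4 : B * (marg v (greedySet v c m) p / c p) ≤ r * v (insert p (greedySet v c m)) := by
        rw [← mul_div_assoc, div_le_iff₀ (hc p)]
        have h5 := mul_lt_mul_of_pos_left h3 hr0
        have h6 : r * (1 / r * B * marg v (greedySet v c m) p)
            = B * marg v (greedySet v c m) p := by field_simp
        rw [h6] at h5
        linarith
      have h7 : r * v (insert p (greedySet v c m)) ≤ r * (v (greedySet v c m) + v {istar}) :=
        mul_le_mul_of_nonneg_left (by linarith) hr0.le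
      linarith
    · have hu : greedySet v c n = Finset.univ :=
        (Finset.card_eq_iff_eq_univ _).1 (dl_card v c n le_rfl)
      refine ⟨n, le_rfl, hu.symm, ?_⟩
      rw [hu]
      have h1 : M ≤ v Finset.univ :=
        dl_opt_le v c B hB _ _ fun S hS _ => hvmono _ _ hS
      have h2 : 0 ≤ v Finset.univ := by
        have := hvmono ∅ Finset.univ (by simp)
        linarith
      nlinarith [mul_nonneg hr0.le h2, mul_nonneg hr0.le hstar0]
  obtain ⟨t, htn, hTt, hMt⟩ := hTM
  rw [hTt]
  by_cases hall : ∃ s, 1 ≤ s ∧ s ≤ t ∧ M - v {istar} < (r + 1) * v (greedySet v c s)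
  · obtain ⟨h1, h2, h3⟩ := Nat.find_spec hall
    have hmin : ∀ s, s < Nat.find hall → _ := fun s hs => Nat.find_min hall hs
    generalize Nat.find hall = k at h1 h2 h3 hmin
    obtain ⟨m, rfl⟩ : ∃ m, k = m + 1 := ⟨k - 1, by omega⟩
    have hsub := hOM m (by omega) (by
      intro s hs1 hs2
      by_contra hcon
      exact hmin s (by omega) ⟨hs1, by omega, not_le.1 hcon⟩)
    have h4 := hvmono _ _ (Finset.subset_inter hsub (dl_mono v c (show m ≤ t by omega)))
    have hi := dl_insert v hv0 hvmono hvsub (pick v c (greedySet v c m)) (greedySet v c m)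
    have hst := histar (pick v c (greedySet v c m))
    rw [greedySet] at h3
    nlinarith
  · push Not at hall
    have hsub := hOM t htn hall
    have h4 := hvmono _ _ (Finset.subset_inter hsub (Finset.Subset.refl (greedySet v c t)))
    nlinarith
end

section
/- Let A and T be finite sets, let E ⊆ A × T be a set of edges of a bipartite graph, and let w : E → ℝ assign a nonnegative weight to each edge. For S ⊆ A define f(S) as the maximum of Σ_{e∈M} w(e) over all matchings M ⊆ E ∩ (S × T). Then f is monotone (f(S) ≤ f(S') whenever S ⊆ S' ⊆ A) and submodular (f(S) + f(S') ≥ f(S ∪ S') + f(S ∩ S') for all S, S' ⊆ A). -/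
open Classical

/-- `M` is a matching of a bipartite graph (with vertex sides `A` and `T`): no two distinct
edges of `M` share a first coordinate, and no two distinct edges share a second coordinate. -/
def IsMatching {A T : Type*} (M : Finset (A × T)) : Prop :=
  (∀ e ∈ M, ∀ e' ∈ M, e.1 = e'.1 → e = e') ∧
  (∀ e ∈ M, ∀ e' ∈ M, e.2 = e'.2 → e = e')

/-- `matchVal E w S` is the maximum of `∑_{e ∈ M} w e` over all matchings `M ⊆ E` whose
edges all have their first coordinate (agent endpoint) in `S`. -/
noncomputable def matchVal {A T : Type*} (E : Finset (A × T)) (w : A × T → ℝ)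
    (S : Finset A) : ℝ :=
  sSup ((fun M => ∑ e ∈ M, w e) ''
    {M : Finset (A × T) | M ⊆ E ∧ IsMatching M ∧ ∀ e ∈ M, e.1 ∈ S})

theorem matchVal_bdd {A T : Type*} (E : Finset (A × T)) (w : A × T → ℝ) (S : Finset A) :
    BddAbove ((fun M => ∑ e ∈ M, w e) ''
    {M : Finset (A × T) | M ⊆ E ∧ IsMatching M ∧ ∀ e ∈ M, e.1 ∈ S}) := by
  apply Set.Finite.bddAbove
  apply Set.Finite.image
  apply (Finset.finite_toSet E.powerset).subset
  intro M hM
  simpa using hM.1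

theorem le_matchVal {A T : Type*} (E : Finset (A × T)) (w : A × T → ℝ) (S : Finset A)
    (M : Finset (A × T)) (h1 : M ⊆ E) (h2 : IsMatching M) (h3 : ∀ e ∈ M, e.1 ∈ S) :
    ∑ e ∈ M, w e ≤ matchVal E w S :=
  le_csSup (matchVal_bdd E w S) ⟨M, ⟨h1, h2, h3⟩, rfl⟩

theorem exists_matchVal {A T : Type*} (E : Finset (A × T)) (w : A × T → ℝ) (S : Finset A) :
    ∃ M : Finset (A × T), M ⊆ E ∧ IsMatching M ∧ (∀ e ∈ M, e.1 ∈ S) ∧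
      matchVal E w S = ∑ e ∈ M, w e := by
  have hf : ((fun M => ∑ e ∈ M, w e) ''
    {M : Finset (A × T) | M ⊆ E ∧ IsMatching M ∧ ∀ e ∈ M, e.1 ∈ S}).Finite := by
    apply Set.Finite.image
    apply (Finset.finite_toSet E.powerset).subset
    intro M hM
    simpa using hM.1
  have hn : ((fun M => ∑ e ∈ M, w e) ''
    {M : Finset (A × T) | M ⊆ E ∧ IsMatching M ∧ ∀ e ∈ M, e.1 ∈ S}).Nonempty :=
    ⟨_, ∅, ⟨by simp, by simp [IsMatching], by simp⟩, rfl⟩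
  obtain ⟨M, ⟨h1, h2, h3⟩, h4⟩ := hn.csSup_mem hf
  exact ⟨M, h1, h2, h3, h4.symm⟩

/-- Gluing two matchings along a set `R` of agents. -/
theorem isMatching_glue {A T : Type*} [DecidableEq A] [DecidableEq T]
    (M N : Finset (A × T)) (R : A → Prop)
    (hM : IsMatching M) (hN : IsMatching N)
    (h : ∀ a a' t, (a, t) ∈ M → (a', t) ∈ N → R a → R a') :
    IsMatching (M.filter (fun e => R e.1) ∪ N.filter (fun e => ¬ R e.1)) := by
  constructor
  · rintro ⟨a, t⟩ he ⟨a', t'⟩ he' (rfl : a = a')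
    simp only [Finset.mem_union, Finset.mem_filter] at he he'
    rcases he with ⟨he, hr⟩ | ⟨he, hr⟩ <;> rcases he' with ⟨he', hr'⟩ | ⟨he', hr'⟩
    · exact hM.1 _ he _ he' rfl
    · exact absurd hr hr'
    · exact absurd hr' hr
    · exact hN.1 _ he _ he' rfl
  · rintro ⟨a, t⟩ he ⟨a', t'⟩ he' (rfl : t = t')
    simp only [Finset.mem_union, Finset.mem_filter] at he he'
    rcases he with ⟨he, hr⟩ | ⟨he, hr⟩ <;> rcases he' with ⟨he', hr'⟩ | ⟨he', hr'⟩
    · exact hM.2 _ he _ he' rfl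
    · exact absurd (h _ _ _ he he' hr) hr'
    · exact absurd (h _ _ _ he' he hr') hr
    · exact hN.2 _ he _ he' rfl

theorem sum_glue {A T : Type*} [DecidableEq A] [DecidableEq T]
    (M N : Finset (A × T)) (R : A → Prop) (w : A × T → ℝ) :
    ∑ e ∈ M.filter (fun e => R e.1) ∪ N.filter (fun e => ¬ R e.1), w e =
    ∑ e ∈ M.filter (fun e => R e.1), w e + ∑ e ∈ N.filter (fun e => ¬ R e.1), w e := by
  apply Finset.sum_union
  rw [Finset.disjoint_left]
  intro e he he'
  exact (Finset.mem_filter.1 he').2 (Finset.mem_filter.1 he).2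

/-- the maximum weight of a matching induced by a set of agents `S` is a
monotone submodular function of `S` (Proposition 6.1). -/
theorem matchVal_monotone_submodular {A T : Type*} [Fintype A] [Fintype T]
    [DecidableEq A] [DecidableEq T]
    (E : Finset (A × T)) (w : A × T → ℝ) (hw : ∀ e ∈ E, 0 ≤ w e) :
    (∀ S S' : Finset A, S ⊆ S' → matchVal E w S ≤ matchVal E w S') ∧
    (∀ S S' : Finset A,
      matchVal E w (S ∪ S') + matchVal E w (S ∩ S') ≤ matchVal E w S + matchVal E w S') := by
  refine ⟨fun S S' h => ?_, fun S S' => ?_⟩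
  · obtain ⟨M, h1, h2, h3, h4⟩ := exists_matchVal E w S
    rw [h4]
    exact le_matchVal E w S' M h1 h2 fun e he => h (h3 e he)
  obtain ⟨M, hME, hM, hMS, hMv⟩ := exists_matchVal E w (S ∪ S')
  obtain ⟨N, hNE, hN, hNS, hNv⟩ := exists_matchVal E w (S ∩ S')
  let r : A → A → Prop := fun a a' => ∃ t, (a, t) ∈ M ∧ (a', t) ∈ N
  let R : A → Prop := fun a => ∃ s, (s ∈ S ∧ s ∉ S') ∧ Relation.ReflTransGen r s a
  have hfwd : ∀ a a' t, (a, t) ∈ M → (a', t) ∈ N → R a → R a' := by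
    rintro a a' t h1 h2 ⟨s, hs, h⟩
    exact ⟨s, hs, h.tail ⟨t, h1, h2⟩⟩
  have hbwd : ∀ a a' t, (a, t) ∈ M → (a', t) ∈ N → R a' → R a := by
    rintro a a' t h1 h2 ⟨s, hs, h⟩
    rcases Relation.ReflTransGen.cases_tail h with h | ⟨b, hb, t', h3, h4⟩
    · subst h
      exact absurd (Finset.mem_inter.1 (hNS _ h2)).2 hs.2
    · have e1 : t' = t := congrArg Prod.snd (hN.1 _ h4 _ h2 rfl)
      subst e1
      have e2 : b = a := congrArg Prod.fst (hM.2 _ h3 _ h1 rfl)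
      subst e2
      exact ⟨s, hs, hb⟩
  have hRS : ∀ a, R a → a ∈ S := by
    rintro a ⟨s, hs, h⟩
    rcases Relation.ReflTransGen.cases_tail h with h | ⟨b, hb, t', h3, h4⟩
    · subst h
      exact hs.1
    · exact (Finset.mem_inter.1 (hNS _ h4)).1
  have hSR : ∀ a, a ∈ S → a ∉ S' → R a :=
    fun a h1 h2 => ⟨a, ⟨h1, h2⟩, Relation.ReflTransGen.refl⟩
  clear_value R
  have hP := le_matchVal E w S _
    (Finset.union_subset ((Finset.filter_subset _ M).trans hME)
      ((Finset.filter_subset _ N).trans hNE))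
    (isMatching_glue M N R hM hN hfwd) (by
      intro e he
      rcases Finset.mem_union.1 he with he | he
      · exact hRS _ (Finset.mem_filter.1 he).2
      · exact (Finset.mem_inter.1 (hNS _ (Finset.mem_filter.1 he).1)).1)
  have hQ := le_matchVal E w S' _
    (Finset.union_subset ((Finset.filter_subset _ N).trans hNE)
      ((Finset.filter_subset _ M).trans hME))
    (isMatching_glue N M R hN hM fun a a' t h1 h2 h => hbwd a' a t h2 h1 h) (by
      intro e he
      rcases Finset.mem_union.1 he with he | he
      · exact (Finset.mem_inter.1 (hNS _ (Finset.mem_filter.1 he).1)).2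
      · obtain ⟨h1, h2⟩ := Finset.mem_filter.1 he
        by_contra hc
        rcases Finset.mem_union.1 (hMS _ h1) with h | h
        · exact h2 (hSR _ h hc)
        · exact hc h)
  rw [sum_glue] at hP hQ
  have a1 := Finset.sum_filter_add_sum_filter_not M (fun e => R e.1) w
  have a2 := Finset.sum_filter_add_sum_filter_not N (fun e => R e.1) w
  rw [hMv, hNv]
  linarith
end

section
/- Let A and T be finite sets, E ⊆ A × T, and suppose each edge (a, t) ∈ E has weight u(t) ≥ 0 depending only on its task endpoint t. For S ⊆ A let f(S) be the maximum of Σ_{(a,t)∈M} u(t) over all matchings M ⊆ E ∩ (S × T). Suppose S ⊆ A admits a maximum-weight matching M ⊆ E ∩ (S × T) of weight f(S) in which every a ∈ S is matched (every a ∈ S is the first coordinate of some edge of M), and let a₀ ∈ A ∖ S be such that f(S ∪ {a₀}) − f(S) > 0. Then there exists a matching M' ⊆ E ∩ ((S ∪ {a₀}) × T) of weight f(S ∪ {a₀}) in which every vertex of S ∪ {a₀} is matched. -/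
open Classical

theorem matchVal_le {A T : Type*} (E : Finset (A × T)) (w : A × T → ℝ) (S : Finset A)
    (N : Finset (A × T)) (h1 : N ⊆ E) (h2 : IsMatching N) (h3 : ∀ e ∈ N, e.1 ∈ S) :
    ∑ e ∈ N, w e ≤ matchVal E w S := by
  apply le_csSup
  · apply Set.Finite.bddAbove
    apply Set.Finite.image
    exact (E.powerset.finite_toSet).subset (fun M hM => by simpa using hM.1)
  · exact ⟨N, ⟨h1, h2, h3⟩, rfl⟩

theorem matchVal_attained {A T : Type*} (E : Finset (A × T)) (w : A × T → ℝ) (S : Finset A) :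
    ∃ N : Finset (A × T), (N ⊆ E ∧ IsMatching N ∧ ∀ e ∈ N, e.1 ∈ S) ∧
      ∑ e ∈ N, w e = matchVal E w S := by
  have := Set.Nonempty.csSup_mem (s := (fun M => ∑ e ∈ M, w e) ''
    {M : Finset (A × T) | M ⊆ E ∧ IsMatching M ∧ ∀ e ∈ M, e.1 ∈ S}) ?_ ?_
  · exact this
  · exact ⟨_, ∅, by simp [IsMatching], rfl⟩
  · apply Set.Finite.image
    exact (E.powerset.finite_toSet).subset (fun M hM => by simpa using hM.1)

/-- if the edge weights depend only on the task endpoint, `S` admits a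
maximum-weight induced matching saturating all of `S`, and adding the agent `a₀ ∉ S` strictly
increases the maximum matching value, then `S ∪ {a₀}` admits a maximum-weight induced
matching saturating all of `S ∪ {a₀}` (Lemma 6.3). -/
theorem matchVal_saturating {A T : Type*} [Fintype A] [Fintype T]
    [DecidableEq A] [DecidableEq T]
    (E : Finset (A × T)) (u : T → ℝ) (hu : ∀ e ∈ E, 0 ≤ u e.2)
    (S : Finset A) (M : Finset (A × T))
    (hME : M ⊆ E) (hMmatch : IsMatching M) (hMS : ∀ e ∈ M, e.1 ∈ S)
    (hMval : ∑ e ∈ M, u e.2 = matchVal E (fun e => u e.2) S)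
    (hMsat : ∀ a ∈ S, ∃ e ∈ M, e.1 = a)
    (a₀ : A) (ha₀ : a₀ ∉ S)
    (hgain : 0 < matchVal E (fun e => u e.2) (insert a₀ S) - matchVal E (fun e => u e.2) S) :
    ∃ M' : Finset (A × T), M' ⊆ E ∧ IsMatching M' ∧ (∀ e ∈ M', e.1 ∈ insert a₀ S) ∧
      ∑ e ∈ M', u e.2 = matchVal E (fun e => u e.2) (insert a₀ S) ∧
      ∀ a ∈ insert a₀ S, ∃ e ∈ M', e.1 = a := by
  classical
  obtain ⟨N, hN, hmax⟩ := Set.exists_max_image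
    {N : Finset (A × T) | (N ⊆ E ∧ IsMatching N ∧ ∀ e ∈ N, e.1 ∈ insert a₀ S) ∧
      ∑ e ∈ N, u e.2 = matchVal E (fun e => u e.2) (insert a₀ S)}
    (fun N => (M ∩ N).card) (Set.toFinite _)
    (matchVal_attained E (fun e => u e.2) (insert a₀ S))
  obtain ⟨⟨hNE, hNm, hNS⟩, hNval⟩ := hN
  refine ⟨N, hNE, hNm, hNS, hNval, ?_⟩
  intro a ha
  by_contra hcon
  push Not at hcon
  rcases Finset.mem_insert.1 ha with rfl | haS
  · have := matchVal_le E (fun e => u e.2) S N hNE hNm (fun e he =>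
      (Finset.mem_insert.1 (hNS e he)).resolve_left (hcon e he))
    skip
    linarith
  · obtain ⟨⟨a', t⟩, heM, hea⟩ := hMsat a haS
    simp only at hea
    subst hea
    have hnot : (a', t) ∉ N.filter (fun e => e.2 ≠ t) := by simp
    have hE' : insert (a', t) (N.filter (fun e => e.2 ≠ t)) ⊆ E :=
      Finset.insert_subset (hME heM) ((Finset.filter_subset _ _).trans hNE)
    have hm' : IsMatching (insert (a', t) (N.filter (fun e => e.2 ≠ t))) := by
      constructor
      · intro e he e' he' h
        simp only [Finset.mem_insert, Finset.mem_filter] at he he'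
        rcases he with rfl | he <;> rcases he' with rfl | he'
        · rfl
        · exact absurd h.symm (hcon e' he'.1)
        · exact absurd h (hcon e he.1)
        · exact hNm.1 e he.1 e' he'.1 h
      · intro e he e' he' h
        simp only [Finset.mem_insert, Finset.mem_filter] at he he'
        rcases he with rfl | he <;> rcases he' with rfl | he'
        · rfl
        · exact absurd h.symm he'.2
        · exact absurd h he.2
        · exact hNm.2 e he.1 e' he'.1 h
    have hS' : ∀ e ∈ insert (a', t) (N.filter (fun e => e.2 ≠ t)), e.1 ∈ insert a₀ S := by
      intro e he
      simp only [Finset.mem_insert, Finset.mem_filter] at he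
      rcases he with rfl | he
      · exact ha
      · exact hNS e he.1
    have hle := matchVal_le E (fun e => u e.2) _ _ hE' hm' hS'
    have hone : ∑ e ∈ N.filter (fun e => ¬ e.2 ≠ t), u e.2 ≤ u t := by
      have hc : (N.filter (fun e => ¬ e.2 ≠ t)).card ≤ 1 := by
        rw [Finset.card_le_one]
        intro e he e' he'
        simp only [Finset.mem_filter, not_not] at he he'
        exact hNm.2 e he.1 e' he'.1 (he.2.trans he'.2.symm)
      have h0 : 0 ≤ u t := hu _ (hME heM)
      rw [Finset.sum_congr rfl (g := fun _ => u t)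
        (fun e he => by simp only [Finset.mem_filter, not_not] at he; rw [he.2])]
      rw [Finset.sum_const, nsmul_eq_mul]
      have : ((N.filter (fun e => ¬ e.2 ≠ t)).card : ℝ) ≤ 1 := by exact_mod_cast hc
      nlinarith
    have hsplit := Finset.sum_filter_add_sum_filter_not N (fun e => e.2 ≠ t) (fun e => u e.2)
    have hval : ∑ e ∈ insert (a', t) (N.filter (fun e => e.2 ≠ t)), u e.2
        = matchVal E (fun e => u e.2) (insert a₀ S) := by
      refine le_antisymm hle ?_
      rw [Finset.sum_insert hnot]
      simp only at hsplit ⊢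
      linarith
    have hlt := hmax _ ⟨⟨hE', hm', hS'⟩, hval⟩
    refine absurd hlt (not_le.2 (Finset.card_lt_card ?_))
    rw [Finset.ssubset_iff_of_subset]
    · exact ⟨(a', t), by simp [heM], fun h => hcon _ (Finset.mem_inter.1 h).2 rfl⟩
    · intro e he
      have he := Finset.mem_inter.1 he
      refine Finset.mem_inter.2 ⟨he.1, Finset.mem_insert_of_mem (Finset.mem_filter.2 ⟨he.2, ?_⟩)⟩
      intro h
      have := hMmatch.2 e he.1 _ heM h
      exact hcon e he.2 (by rw [this])
end
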